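/- arXiv:2409.02400 — 6 statements merged into one kernel-verified Lean document; each statement's English description precedes it below -/
import Mathlib

section
/- Fix ε > 0, δ > 0, a ∈ ℝ. Let (u, p, v, q) : ℝ → ℝ⁴ be differentiable and satisfy the spatial ODE system δ u'(x) = p(x), δ p'(x) = f(u(x)) − v(x), v'(x) = q(x), q'(x) = ε(u(x) − a) for all x. Then the quantity G(u(x), p(x), v(x), q(x)) := (ε/2)p(x)² − (1/2)q(x)² − ε( f̃(u(x)) + (a − u(x)) v(x) ) is constant in x; i.e., G is a first integral of the spatial ODE system. -/
/-- The quantity `G(u,p,v,q) = (ε/2)p² - (1/2)q² - ε(f̃(u) + (a-u)v)`, with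
`f̃(u) = u⁴/12 - u²/2`, is a first integral of the spatial ODE system
`δu' = p, δp' = f(u) - v, v' = q, q' = ε(u - a)` where `f(u) = u³/3 - u`. -/
theorem first_integral_spatial_ODE (ε δ a : ℝ) (hε : 0 < ε) (hδ : 0 < δ)
    (u p v q : ℝ → ℝ)
    (hu : Differentiable ℝ u) (hp : Differentiable ℝ p)
    (hv : Differentiable ℝ v) (hq : Differentiable ℝ q)
    (h1 : ∀ x, δ * deriv u x = p x)
    (h2 : ∀ x, δ * deriv p x = (u x ^ 3 / 3 - u x) - v x)
    (h3 : ∀ x, deriv v x = q x)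
    (h4 : ∀ x, deriv q x = ε * (u x - a)) :
    ∀ x y : ℝ,
      (ε / 2) * p x ^ 2 - (1 / 2) * q x ^ 2
          - ε * ((u x ^ 4 / 12 - u x ^ 2 / 2) + (a - u x) * v x)
        = (ε / 2) * p y ^ 2 - (1 / 2) * q y ^ 2
          - ε * ((u y ^ 4 / 12 - u y ^ 2 / 2) + (a - u y) * v y) := by
  have key : ∀ x, HasDerivAt (fun x => (ε / 2) * p x ^ 2 - (1 / 2) * q x ^ 2
      - ε * ((u x ^ 4 / 12 - u x ^ 2 / 2) + (a - u x) * v x)) 0 x := by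
    intro x
    have du := (hu x).hasDerivAt
    have dp := (hp x).hasDerivAt
    have dv := (hv x).hasDerivAt
    have dq := (hq x).hasDerivAt
    have H := (((dp.fun_pow 2).const_mul (ε / 2)).fun_sub ((dq.fun_pow 2).const_mul (1 / 2))).fun_sub
      (((((du.fun_pow 4).div_const 12).fun_sub ((du.fun_pow 2).div_const 2)).fun_add
        ((du.const_sub a).fun_mul dv)).const_mul ε)
    refine H.congr_deriv ?_
    norm_num
    linear_combination (-ε * deriv p x) * h1 x + (ε * deriv u x) * h2 x
      - ε * (a - u x) * h3 x - q x * h4 x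
  intro x y
  exact is_const_of_deriv_eq_zero (fun x => (key x).differentiableAt) (fun x => (key x).deriv) x y
end

section
/- Let f(u) = u³/3 − u and fix v ∈ (0, 2/3). Suppose u₋ < −1 < u₀ < 1 < u₊ are real numbers with f(u₋) = f(u₀) = f(u₊) = v. Then, with h(u) := H_fast(u, 0; v) = u v − u⁴/12 + u²/2, one has h(u₊) > h(u₋) > h(u₀), and there exists u* ∈ (u₀, u₊) such that h(u*) = h(u₋). (This is the key step proving that for each v ∈ (0, 2/3) the planar Hamiltonian fast system has an orbit homoclinic to the saddle (u₋, 0), connecting (u₋, 0) to (u*, 0) and back.) -/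
/-- Key step in the existence of fast homoclinics: for `v ∈ (0, 2/3)` and roots
`u₋ < -1 < u₀ < 1 < u₊` of `f(u) = v` (with `f(u) = u³/3 - u`), the function
`h(u) = H_fast(u,0;v) = uv - u⁴/12 + u²/2` satisfies `h(u₊) > h(u₋) > h(u₀)` and
there is `u* ∈ (u₀, u₊)` with `h(u*) = h(u₋)`. -/
theorem fast_homoclinic_key (v um u0 up : ℝ)
    (hv : v ∈ Set.Ioo (0 : ℝ) (2/3))
    (h1 : um < -1) (h2 : -1 < u0) (h3 : u0 < 1) (h4 : 1 < up)
    (fm : um ^ 3 / 3 - um = v) (f0 : u0 ^ 3 / 3 - u0 = v) (fp : up ^ 3 / 3 - up = v) :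
    let h : ℝ → ℝ := fun u => u * v - u ^ 4 / 12 + u ^ 2 / 2
    h up > h um ∧ h um > h u0 ∧ ∃ us ∈ Set.Ioo u0 up, h us = h um := by
  intro h
  obtain ⟨hv0, hv1⟩ := hv
  have q1 : um ^ 2 + um * u0 + u0 ^ 2 = 3 := by
    have hne : um - u0 ≠ 0 := by linarith
    apply mul_left_cancel₀ hne
    linear_combination 3 * fm - 3 * f0
  have q2 : up ^ 2 + up * u0 + u0 ^ 2 = 3 := by
    have hne : up - u0 ≠ 0 := by linarith
    apply mul_left_cancel₀ hne
    linear_combination 3 * fp - 3 * f0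
  have hs : um = -u0 - up := by
    have hne : um - up ≠ 0 := by linarith
    have : um + u0 + up = 0 := by
      apply mul_left_cancel₀ hne
      linear_combination q1 - q2
    linarith
  have hb : u0 < 0 := by
    by_contra hc
    push Not at hc
    nlinarith [mul_nonneg hc (by nlinarith : (0:ℝ) ≤ 3 - u0 ^ 2)]
  have hvv : v = -(u0 * up * (u0 + up)) / 3 := by
    linear_combination -fp + up / 3 * q2
  have e1 : h up - h um = (up - um) ^ 3 * (-u0) / 12 := by
    simp only [h]
    subst hs
    linear_combination (up - (-u0 - up)) * hvv - (up ^ 2 - (-u0 - up) ^ 2) / 6 * q2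
  have e2 : h um - h u0 = (u0 - um) ^ 3 * up / 12 := by
    simp only [h]
    subst hs
    linear_combination ((-u0 - up) - u0) * hvv - ((-u0 - up) ^ 2 - u0 ^ 2) / 6 * q2
  have p1 : 0 < (up - um) ^ 3 * (-u0) / 12 :=
    div_pos (mul_pos (pow_pos (by linarith) 3) (by linarith)) (by norm_num)
  have p2 : 0 < (u0 - um) ^ 3 * up / 12 := by
    have := mul_pos (pow_pos (by linarith : 0 < u0 - um) 3) (by linarith : 0 < up)
    linarith
  have g1 : h up > h um := by linarith
  have g2 : h um > h u0 := by linarith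
  refine ⟨g1, g2, ?_⟩
  have hcont : Continuous h := by
    simp only [h]
    fun_prop
  exact intermediate_value_Ioo (by linarith : u0 ≤ up) hcont.continuousOn ⟨g2, g1⟩
end

section
/- Let f(u) = u³/3 − u. (i) For every v ∈ (0, 2/3): if u > 1 and f(u) = v then H_fast(u, 0; v) > 3/4, while if u < −1 and f(u) = v then H_fast(u, 0; v) < 3/4. (ii) For every v ∈ (−2/3, 0): if u > 1 and f(u) = v then H_fast(u, 0; v) < 3/4, while if u < −1 and f(u) = v then H_fast(u, 0; v) > 3/4. (This shows that for v ≠ 0 near zero the two saddles of the fast system lie on different level sets of H_fast, with the ordering switching sign across v = 0, which yields the transversality of the intersections W^u(S_s^−) ∩ W^s(S_s^+) and W^u(S_s^+) ∩ W^s(S_s^−) in the plane {v = 0}.) -/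
/-- For `0 < v < 2/3`, the right saddle of the fast system (root of `f(u) = v` with
`u > 1`) lies above the level `H_fast = 3/4` while the left saddle (root with `u < -1`)
lies below it; for `-2/3 < v < 0` the ordering is reversed.  Here
`H_fast(u,0;v) = -(u⁴/12 - u²/2) + uv`. -/
theorem saddle_level_splitting :
    (∀ v ∈ Set.Ioo (0 : ℝ) (2/3), ∀ u : ℝ,
      (1 < u → u ^ 3 / 3 - u = v → -(u ^ 4 / 12 - u ^ 2 / 2) + u * v > 3/4) ∧
      (u < -1 → u ^ 3 / 3 - u = v → -(u ^ 4 / 12 - u ^ 2 / 2) + u * v < 3/4)) ∧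
    (∀ v ∈ Set.Ioo (-(2/3) : ℝ) 0, ∀ u : ℝ,
      (1 < u → u ^ 3 / 3 - u = v → -(u ^ 4 / 12 - u ^ 2 / 2) + u * v < 3/4) ∧
      (u < -1 → u ^ 3 / 3 - u = v → -(u ^ 4 / 12 - u ^ 2 / 2) + u * v > 3/4)) := by
  have key : ∀ u : ℝ, -(u ^ 4 / 12 - u ^ 2 / 2) + u * (u ^ 3 / 3 - u) - 3/4
      = (u ^ 2 - 3) * ((u ^ 2 + 1) / 4) := fun u => by ring
  have pos : ∀ u : ℝ, 0 < (u ^ 2 + 1) / 4 := fun u => by positivity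
  refine ⟨fun v hv u => ⟨fun hu h => ?_, fun hu h => ?_⟩,
    fun v hv u => ⟨fun hu h => ?_, fun hu h => ?_⟩⟩ <;> obtain ⟨h1, h2⟩ := hv <;> subst h
  · have h3 : 0 < u ^ 2 - 3 := by
      by_contra hc
      nlinarith
    have := mul_pos h3 (pos u)
    linarith [key u]
  · have h3 : u ^ 2 - 3 < 0 := by
      by_contra hc
      nlinarith
    have := mul_neg_of_neg_of_pos h3 (pos u)
    linarith [key u]
  · have h3 : u ^ 2 - 3 < 0 := by
      by_contra hc
      nlinarith
    have := mul_neg_of_neg_of_pos h3 (pos u)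
    linarith [key u]
  · have h3 : 0 < u ^ 2 - 3 := by
      by_contra hc
      nlinarith
    have := mul_pos h3 (pos u)
    linarith [key u]
end

section
/- Fix ε > 0 and let H_desing(u, q; 1) = −q²/2 + ε(u⁴/4 − u³/3 − u²/2 + u) (the Hamiltonian of the desingularized reduced system at a = 1). Then H_desing(1, 0; 1) = 5ε/12, and for all real u, q: H_desing(u, q; 1) − 5ε/12 = −q²/2 + (ε/12)(u − 1)³(3u + 5). Consequently, the level set {H_desing(·,·;1) = 5ε/12} through the cusp point (1, 0) of the reduced flow is exactly the set {q² = (ε/6)(u − 1)³(3u + 5)}; in particular, for u ≥ 1 it consists of the two curve branches q = ±√(ε/6)·(u − 1)^{3/2}·√(3u + 5), which are the one-branched local stable and unstable manifolds of the RFSN-II point (1, 0). -/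
/-- At `a = 1`, the Hamiltonian `H(u,q) = -q²/2 + ε(u⁴/4 - u³/3 - u²/2 + u)` of the
desingularized reduced system satisfies `H(1,0) = 5ε/12`,
`H(u,q) - 5ε/12 = -q²/2 + (ε/12)(u-1)³(3u+5)`; the level set through the cusp `(1,0)`
is exactly `{q² = (ε/6)(u-1)³(3u+5)}`, and for `u ≥ 1` it consists of the two branches
`q = ±√(ε/6)·(u-1)^{3/2}·√(3u+5)`. -/
theorem cusp_level_set (ε : ℝ) (hε : 0 < ε) :
    let H : ℝ → ℝ → ℝ := fun u q =>
      -(q ^ 2) / 2 + ε * (u ^ 4 / 4 - u ^ 3 / 3 - u ^ 2 / 2 + u)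
    H 1 0 = 5 * ε / 12 ∧
    (∀ u q : ℝ,
      H u q - 5 * ε / 12 = -(q ^ 2) / 2 + (ε / 12) * (u - 1) ^ 3 * (3 * u + 5)) ∧
    {x : ℝ × ℝ | H x.1 x.2 = 5 * ε / 12}
      = {x : ℝ × ℝ | x.2 ^ 2 = (ε / 6) * (x.1 - 1) ^ 3 * (3 * x.1 + 5)} ∧
    (∀ u q : ℝ, 1 ≤ u →
      (H u q = 5 * ε / 12 ↔
        q = Real.sqrt (ε / 6) * ((u - 1) * Real.sqrt (u - 1)) * Real.sqrt (3 * u + 5) ∨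
        q = -(Real.sqrt (ε / 6) * ((u - 1) * Real.sqrt (u - 1)) * Real.sqrt (3 * u + 5)))) := by
  intro H
  have key : ∀ u q : ℝ,
      H u q - 5 * ε / 12 = -(q ^ 2) / 2 + (ε / 12) * (u - 1) ^ 3 * (3 * u + 5) := by
    intro u q
    simp only [H]
    ring
  have lev : ∀ u q : ℝ,
      H u q = 5 * ε / 12 ↔ q ^ 2 = (ε / 6) * (u - 1) ^ 3 * (3 * u + 5) := by
    intro u q
    have h := key u q
    constructor
    · intro h1
      linarith
    · intro h1
      linarith
  refine ⟨?_, key, ?_, ?_⟩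
  · simp only [H]
    ring
  · ext x
    exact lev x.1 x.2
  · intro u q hu
    have h1 : Real.sqrt (ε / 6) ^ 2 = ε / 6 := Real.sq_sqrt (by positivity)
    have h2 : Real.sqrt (u - 1) ^ 2 = u - 1 := Real.sq_sqrt (by linarith)
    have h3 : Real.sqrt (3 * u + 5) ^ 2 = 3 * u + 5 := Real.sq_sqrt (by linarith)
    have h4 : (Real.sqrt (ε / 6) * ((u - 1) * Real.sqrt (u - 1)) * Real.sqrt (3 * u + 5)) ^ 2
        = (ε / 6) * (u - 1) ^ 3 * (3 * u + 5) := by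
      rw [mul_pow, mul_pow, mul_pow, h1, h2, h3]
      ring
    rw [lev, ← h4]
    exact sq_eq_sq_iff_eq_or_eq_neg
end

section
/- Fix ε > 0 and define Γ₀ : ℝ → ℝ⁴ by Γ₀(y) = ( (√ε/12)y², y/6, (ε/144)y⁴ − 1/6, (√ε/36)y³ ). Then Γ₀ = (u, p, v, q) is an exact solution of the blown-up system u' = √ε p, p' = u² − v, v' = √ε q, q' = u (the r₂ = 0 system in the rescaling chart K₂), and Γ₀ lies in the zero level set of the Hamiltonian: H₂(Γ₀(y)) = 0 for all y ∈ ℝ, where H₂(u, p, v, q) = (√ε/2)(p² − q²) + u v − u³/3. The half-orbits Γ₀⁻ = Γ₀|_{y ≤ 0} and Γ₀⁺ = Γ₀|_{y ≥ 0} are, respectively, the true and faux singular canards of the RFSN-II singularity. -/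
/-- The explicit algebraic curve
`Γ₀(y) = ((√ε/12)y², y/6, (ε/144)y⁴ - 1/6, (√ε/36)y³)` solves the blown-up system
`u' = √ε p, p' = u² - v, v' = √ε q, q' = u` in the rescaling chart `K₂` at `r₂ = 0`,
and lies in the zero level set of the Hamiltonian
`H₂(u,p,v,q) = (√ε/2)(p² - q²) + uv - u³/3`. -/
theorem Gamma0_algebraic_solution (ε : ℝ) (hε : 0 < ε) :
    let u : ℝ → ℝ := fun y => (Real.sqrt ε / 12) * y ^ 2
    let p : ℝ → ℝ := fun y => y / 6
    let v : ℝ → ℝ := fun y => (ε / 144) * y ^ 4 - 1/6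
    let q : ℝ → ℝ := fun y => (Real.sqrt ε / 36) * y ^ 3
    (∀ y, deriv u y = Real.sqrt ε * p y) ∧
    (∀ y, deriv p y = u y ^ 2 - v y) ∧
    (∀ y, deriv v y = Real.sqrt ε * q y) ∧
    (∀ y, deriv q y = u y) ∧
    (∀ y, (Real.sqrt ε / 2) * (p y ^ 2 - q y ^ 2) + u y * v y - u y ^ 3 / 3 = 0) := by
  intro u p v q
  have hs : Real.sqrt ε ^ 2 = ε := Real.sq_sqrt hε.le
  refine ⟨fun y => ?_, fun y => ?_, fun y => ?_, fun y => ?_, fun y => ?_⟩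
  · have h : HasDerivAt u _ y := (hasDerivAt_pow 2 y).const_mul (Real.sqrt ε / 12)
    rw [h.deriv]
    simp only [p]
    norm_num
    ring
  · have h : HasDerivAt p _ y := (hasDerivAt_id y).div_const 6
    rw [h.deriv]
    simp only [u, v]
    linear_combination (-(y ^ 4 / 144)) * hs
  · have h : HasDerivAt v _ y := ((hasDerivAt_pow 4 y).const_mul (ε / 144)).sub_const (1/6)
    rw [h.deriv]
    simp only [q]
    norm_num
    linear_combination (-(y ^ 3 / 36)) * hs
  · have h : HasDerivAt q _ y := (hasDerivAt_pow 3 y).const_mul (Real.sqrt ε / 36)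
    rw [h.deriv]
    simp only [u]
    norm_num
    ring
  · simp only [u, p, v, q]
    linear_combination (-(Real.sqrt ε * y ^ 6 / 1728)) * hs
end

section
/- Fix ε > 0 and let Γ₀(y) = (u₂(y), p₂(y), v₂(y), q₂(y)) = ( (√ε/12)y², y/6, (ε/144)y⁴ − 1/6, (√ε/36)y³ ). Define the chart-transition map (valid for u₂ > 0) by κ(u₂, p₂, v₂, q₂) = ( 1/u₂, p₂/u₂^{3/2}, v₂/u₂², q₂/u₂^{3/2} ). Then κ(Γ₀(y)) → (0, 0, 1, 2√3/(3ε^{1/4})) as y → +∞, and κ(Γ₀(y)) → (0, 0, 1, −2√3/(3ε^{1/4})) as y → −∞. Hence, in the entry/exit chart K₁ of the blow-up, the algebraic solution Γ₀ is forward asymptotic to the fixed point (δ₁, p₁, v₁, q₁) = (0, 0, 1, q⁺) and backward asymptotic to (0, 0, 1, q⁻) on the line ℓ of equilibria, where q^± = ±2√3/(3ε^{1/4}). -/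
open Filter

lemma kappa_formula (a s σ y : ℝ) (ha : 0 < a) (hs : 0 < s) (hs2 : s ^ 2 = 3)
    (hσ : σ ^ 2 = 1) (hy : 0 < σ * y) :
    ((12 / a ^ 2 * (y⁻¹) ^ 2, σ * (4 * s / a ^ 3) * (y⁻¹) ^ 2, 1 - 24 / a ^ 4 * (y⁻¹) ^ 4,
      σ * (2 * s / (3 * a))) : ℝ × ℝ × ℝ × ℝ) =
    (1 / (a ^ 2 / 12 * y ^ 2),
      y / 6 / (a ^ 2 / 12 * y ^ 2 * Real.sqrt (a ^ 2 / 12 * y ^ 2)),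
      (a ^ 4 / 144 * y ^ 4 - 1 / 6) / (a ^ 2 / 12 * y ^ 2) ^ 2,
      a ^ 2 / 36 * y ^ 3 / (a ^ 2 / 12 * y ^ 2 * Real.sqrt (a ^ 2 / 12 * y ^ 2))) := by
  have hy0 : y ≠ 0 := by rintro rfl; simp at hy
  have hσ0 : σ ≠ 0 := by rintro rfl; simp at hy
  have hr : Real.sqrt (a ^ 2 / 12 * y ^ 2) = a * (σ * y) / (2 * s) := by
    rw [Real.sqrt_eq_iff_mul_self_eq (by positivity) (by positivity)]
    field_simp
    rw [hs2, hσ]; ring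
  rw [hr]
  refine Prod.ext ?_ (Prod.ext ?_ (Prod.ext ?_ ?_))
  · simp only []; field_simp
  · simp only []; field_simp; rw [hσ]; ring
  · simp only []; field_simp; ring
  · simp only []; field_simp; rw [hσ]; ring

lemma kappa_limit (a s σ : ℝ) (l : Filter ℝ) (hl : Tendsto (fun y : ℝ => y⁻¹) l (nhds 0)) :
    Tendsto (fun y : ℝ => ((12 / a ^ 2 * (y⁻¹) ^ 2, σ * (4 * s / a ^ 3) * (y⁻¹) ^ 2,
      1 - 24 / a ^ 4 * (y⁻¹) ^ 4, σ * (2 * s / (3 * a))) : ℝ × ℝ × ℝ × ℝ)) l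
      (nhds (0, 0, 1, σ * (2 * s / (3 * a)))) := by
  have hc : Continuous (fun z : ℝ => ((12 / a ^ 2 * z ^ 2, σ * (4 * s / a ^ 3) * z ^ 2,
      1 - 24 / a ^ 4 * z ^ 4, σ * (2 * s / (3 * a))) : ℝ × ℝ × ℝ × ℝ)) := by fun_prop
  have := (hc.tendsto 0).comp hl
  simpa [Function.comp_def] using this

/-- Forward and backward asymptotics of the algebraic solution `Γ₀` in the entry/exit
chart `K₁`: with `κ(u,p,v,q) = (1/u, p/u^{3/2}, v/u², q/u^{3/2})`, the image of `Γ₀`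
tends to `(0, 0, 1, ±2√3/(3ε^{1/4}))` as `y → ±∞`, i.e. to the fixed points
`(0,0,1,q^±)` on the line `ℓ` of equilibria. -/
theorem Gamma0_asymptotics_K1 (ε : ℝ) (hε : 0 < ε) :
    let u : ℝ → ℝ := fun y => (Real.sqrt ε / 12) * y ^ 2
    let p : ℝ → ℝ := fun y => y / 6
    let v : ℝ → ℝ := fun y => (ε / 144) * y ^ 4 - 1/6
    let q : ℝ → ℝ := fun y => (Real.sqrt ε / 36) * y ^ 3
    let κ : ℝ → ℝ × ℝ × ℝ × ℝ := fun y =>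
      (1 / u y, p y / (u y * Real.sqrt (u y)), v y / (u y) ^ 2,
       q y / (u y * Real.sqrt (u y)))
    Tendsto κ atTop
        (nhds (0, 0, 1, 2 * Real.sqrt 3 / (3 * ε ^ ((1 : ℝ)/4)))) ∧
    Tendsto κ atBot
        (nhds (0, 0, 1, -(2 * Real.sqrt 3 / (3 * ε ^ ((1 : ℝ)/4))))) := by
  intro u p v q κ
  have ha : 0 < ε ^ ((1 : ℝ)/4) := Real.rpow_pos_of_pos hε _
  have h4 : ε = (ε ^ ((1 : ℝ)/4)) ^ 4 := by
    rw [← Real.rpow_natCast, ← Real.rpow_mul hε.le]; norm_num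
  have h2 : Real.sqrt ε = (ε ^ ((1 : ℝ)/4)) ^ 2 := by
    rw [Real.sqrt_eq_rpow, ← Real.rpow_natCast, ← Real.rpow_mul hε.le]; norm_num
  have hs : 0 < Real.sqrt 3 := by positivity
  have hs2 : Real.sqrt 3 ^ 2 = 3 := Real.sq_sqrt (by norm_num)
  generalize ε ^ ((1 : ℝ)/4) = a at *
  have key : ∀ y : ℝ, κ y = (1 / (a ^ 2 / 12 * y ^ 2),
      y / 6 / (a ^ 2 / 12 * y ^ 2 * Real.sqrt (a ^ 2 / 12 * y ^ 2)),
      (a ^ 4 / 144 * y ^ 4 - 1 / 6) / (a ^ 2 / 12 * y ^ 2) ^ 2,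
      a ^ 2 / 36 * y ^ 3 / (a ^ 2 / 12 * y ^ 2 * Real.sqrt (a ^ 2 / 12 * y ^ 2))) := fun y => by
    simp only [κ, u, p, v, q, h2]
    rw [h4]
  constructor
  · have h := kappa_limit a (Real.sqrt 3) 1 atTop tendsto_inv_atTop_zero
    rw [one_mul (2 * Real.sqrt 3 / (3 * a))] at h
    refine h.congr' ?_
    filter_upwards [eventually_gt_atTop 0] with y hy
    rw [key, ← kappa_formula a (Real.sqrt 3) 1 y ha hs hs2 (by norm_num) (by linarith),
      one_mul (2 * Real.sqrt 3 / (3 * a))]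
  · have h := kappa_limit a (Real.sqrt 3) (-1) atBot tendsto_inv_atBot_zero
    rw [neg_one_mul (2 * Real.sqrt 3 / (3 * a))] at h
    refine h.congr' ?_
    filter_upwards [eventually_lt_atBot 0] with y hy
    rw [key, ← kappa_formula a (Real.sqrt 3) (-1) y ha hs hs2 (by norm_num) (by linarith),
      neg_one_mul (2 * Real.sqrt 3 / (3 * a))]
end
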